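/- arXiv:1305.6162 — 2 statements merged into one kernel-verified Lean document; each statement's English description precedes it below -/
import Mathlib

section
/- There exists a unique basis {H̲_w : w ∈ S_n} of the Hecke algebra H_n consisting of bar-invariant elements such that H̲_w = H_w + Σ_{w' ≺ w} P_{w',w}(q)·H_{w'} with P_{w',w} ∈ q·ℤ[q] for every w' ≺ w. -/
/-!
STATEMENT 0: Existence and uniqueness of the Kazhdan-Lusztig (canonical) basis of the
Hecke algebra `H_n` of the symmetric group `S_n`.

The Hecke algebra is encoded as a `ℂ(q)`-algebra `A` together with a standard basis
`H : Equiv.Perm (Fin n) → A` satisfying the defining properties (`H 1 = 1`,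
`H (w * sᵢ) = H w * H sᵢ` when the length goes up and the quadratic relation), and a
bar involution `bar` which is a ring homomorphism, semilinear with respect to a field
homomorphism `barK` with `barK q = q⁻¹`, and satisfying `bar (H w) = (H w⁻¹)⁻¹`.
-/

open scoped Classical

noncomputable section

abbrev K : Type := RatFunc ℂ

noncomputable def q : K := RatFunc.X

/-- The simple transposition `s_i = (i, i+1)` (0-based) in the symmetric group `S_n`. -/
def s (n : ℕ) (i : Fin (n - 1)) : Equiv.Perm (Fin n) :=
  Equiv.swap ⟨(i : ℕ), by have := i.isLt; omega⟩ ⟨(i : ℕ) + 1, by have := i.isLt; omega⟩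

def wordProd (n : ℕ) (l : List (Fin (n - 1))) : Equiv.Perm (Fin n) :=
  (l.map (s n)).prod

/-- The length of a permutation: minimal length of an expression in simple transpositions. -/
def len (n : ℕ) (w : Equiv.Perm (Fin n)) : ℕ :=
  sInf {k | ∃ l : List (Fin (n - 1)), l.length = k ∧ wordProd n l = w}

/-- Bruhat order on `S_n`: `u ≤ w` iff some reduced expression of `w` admits a subword
which is an expression of `u`. -/
def bruhatLE (n : ℕ) (u w : Equiv.Perm (Fin n)) : Prop :=
  ∃ l : List (Fin (n - 1)), l.length = len n w ∧ wordProd n l = w ∧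
    ∃ t : List (Fin (n - 1)), t.Sublist l ∧ wordProd n t = u

/-- Strict Bruhat order `u ≺ w`. -/
def bruhatLT (n : ℕ) (u w : Equiv.Perm (Fin n)) : Prop :=
  bruhatLE n u w ∧ u ≠ w


namespace KL

theorem s_flip (n : ℕ) (j : Fin (n - 1)) (x y : Fin n) (hxy : x < y)
    (h : s n j y < s n j x) : (x : ℕ) = j ∧ (y : ℕ) = j + 1 := by
  unfold s at h
  rw [Equiv.swap_apply_def, Equiv.swap_apply_def] at h
  simp only [Fin.ext_iff, Fin.lt_def] at *
  split_ifs at h <;> simp_all <;> omega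

theorem s_mul_s (n : ℕ) (j : Fin (n - 1)) : s n j * s n j = 1 := by
  unfold s; exact Equiv.swap_mul_self _ _

theorem mul_s_s (n : ℕ) (w : Equiv.Perm (Fin n)) (j : Fin (n - 1)) :
    w * s n j * s n j = w := by
  rw [mul_assoc, s_mul_s, mul_one]

theorem s_inv (n : ℕ) (j : Fin (n - 1)) : (s n j)⁻¹ = s n j := by
  unfold s; exact Equiv.swap_inv _ _

theorem wordProd_cons (n : ℕ) (j) (l) : wordProd n (j :: l) = s n j * wordProd n l := by
  simp [wordProd]

theorem wordProd_append (n : ℕ) (l m) :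
    wordProd n (l ++ m) = wordProd n l * wordProd n m := by
  simp [wordProd]

theorem wordProd_snoc (n : ℕ) (l) (j) : wordProd n (l ++ [j]) = wordProd n l * s n j := by
  simp [wordProd]

theorem exch (n : ℕ) (t : List (Fin (n - 1))) (a b : Fin n) (hab : a < b)
    (h : wordProd n t b < wordProd n t a) :
    ∃ t' : List (Fin (n - 1)), t'.Sublist t ∧ t'.length + 1 = t.length ∧
      wordProd n t' = wordProd n t * Equiv.swap a b := by
  induction t with
  | nil => simp [wordProd] at h; exact absurd h (by simpa using hab.le)
  | cons j t ih =>
    by_cases hu : wordProd n t b < wordProd n t a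
    · obtain ⟨t', h1, h2, h3⟩ := ih hu
      exact ⟨j :: t', h1.cons_cons j, by simp [h2], by
        rw [wordProd_cons, wordProd_cons, h3, mul_assoc]⟩
    · have hu' : wordProd n t a < wordProd n t b := by
        refine lt_of_le_of_ne (not_lt.mp hu) ?_
        intro h; exact hab.ne ((wordProd n t).injective h)
      rw [wordProd_cons] at h
      obtain ⟨h1, h2⟩ := s_flip n j _ _ hu' h
      refine ⟨t, List.sublist_cons_self _ _, by simp, ?_⟩
      rw [wordProd_cons, mul_assoc, Equiv.mul_swap_eq_swap_mul, ← mul_assoc]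
      have : s n j = Equiv.swap (wordProd n t a) (wordProd n t b) := by
        unfold s; congr 1 <;> apply Fin.ext <;> simp [h1, h2]
      rw [this, Equiv.swap_mul_self, one_mul]

theorem exists_word (n : ℕ) (w : Equiv.Perm (Fin n)) : ∃ l, wordProd n l = w := by
  cases n with
  | zero => exact ⟨[], Subsingleton.elim _ _⟩
  | succ m =>
    have hw : w ∈ Submonoid.closure
        (Set.range fun i : Fin m ↦ Equiv.swap i.castSucc i.succ) := by
      rw [Equiv.Perm.mclosure_swap_castSucc_succ]; trivial
    induction hw using Submonoid.closure_induction with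
    | mem x hx =>
      obtain ⟨i, rfl⟩ := hx
      exact ⟨[i], by simp [wordProd]; rfl⟩
    | one => exact ⟨[], rfl⟩
    | mul x y _ _ hx hy =>
      obtain ⟨l, rfl⟩ := hx
      obtain ⟨m, rfl⟩ := hy
      exact ⟨l ++ m, wordProd_append _ _ _⟩

theorem exists_reduced (n : ℕ) (w : Equiv.Perm (Fin n)) :
    ∃ l : List (Fin (n - 1)), l.length = len n w ∧ wordProd n l = w := by
  have : len n w ∈ {k | ∃ l : List (Fin (n - 1)), l.length = k ∧ wordProd n l = w} := by
    apply Nat.sInf_mem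
    obtain ⟨l, hl⟩ := exists_word n w
    exact ⟨_, l, rfl, hl⟩
  exact this

theorem len_le (n : ℕ) (l : List (Fin (n - 1))) : len n (wordProd n l) ≤ l.length :=
  Nat.sInf_le ⟨l, rfl, rfl⟩

theorem len_swap_lt (n : ℕ) (w : Equiv.Perm (Fin n)) (a b : Fin n) (hab : a < b)
    (h : w b < w a) : len n (w * Equiv.swap a b) < len n w := by
  obtain ⟨l, h1, rfl⟩ := exists_reduced n w
  obtain ⟨t, h3, h4, h5⟩ := exch n l a b hab h
  have := len_le n t
  rw [h5] at this
  omega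

theorem len_mul_s_le (n : ℕ) (w : Equiv.Perm (Fin n)) (i : Fin (n - 1)) :
    len n (w * s n i) ≤ len n w + 1 := by
  obtain ⟨l, h1, rfl⟩ := exists_reduced n w
  have := len_le n (l ++ [i])
  rw [wordProd_snoc] at this
  simpa [h1] using this

/-- one upward step by a reflection -/
def step (n : ℕ) (x y : Equiv.Perm (Fin n)) : Prop :=
  ∃ a b : Fin n, a < b ∧ x a < x b ∧ y = x * Equiv.swap a b

/-- Bruhat order by reflections -/
def le' (n : ℕ) : Equiv.Perm (Fin n) → Equiv.Perm (Fin n) → Prop :=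
  Relation.ReflTransGen (step n)

theorem step_back {n : ℕ} {x y : Equiv.Perm (Fin n)} (h : step n x y) :
    ∃ a b : Fin n, a < b ∧ y b < y a ∧ x = y * Equiv.swap a b := by
  obtain ⟨a, b, hab, h, rfl⟩ := h
  exact ⟨a, b, hab, by simpa using h, by simp [mul_assoc]⟩

theorem step_len {n : ℕ} {x y : Equiv.Perm (Fin n)} (h : step n x y) :
    len n x < len n y := by
  obtain ⟨a, b, hab, h', rfl⟩ := step_back h
  exact len_swap_lt n y a b hab h'

theorem le'_len {n : ℕ} {x y : Equiv.Perm (Fin n)} (h : le' n x y) :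
    x = y ∨ len n x < len n y := by
  induction h with
  | refl => exact Or.inl rfl
  | tail _ h ih =>
    right
    have := step_len h
    rcases ih with rfl | ih <;> omega

theorem s_cases (n : ℕ) (w : Equiv.Perm (Fin n)) (i : Fin (n - 1)) :
    (step n w (w * s n i) ∧ len n (w * s n i) = len n w + 1) ∨
    (step n (w * s n i) w ∧ len n w = len n (w * s n i) + 1) := by
  set a : Fin n := ⟨(i : ℕ), by have := i.isLt; omega⟩ with ha
  set b : Fin n := ⟨(i : ℕ) + 1, by have := i.isLt; omega⟩ with hb
  have hs : s n i = Equiv.swap a b := rfl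
  have hab : a < b := by simp [ha, hb, Fin.lt_def]
  have h1 := len_mul_s_le n w i
  have h2 := len_mul_s_le n (w * s n i) i
  rw [mul_s_s] at h2
  rcases lt_or_gt_of_ne (fun h => hab.ne (w.injective h) : w a ≠ w b) with h | h
  · left
    have : step n w (w * s n i) := ⟨a, b, hab, h, by rw [hs]⟩
    exact ⟨this, by have := step_len this; omega⟩
  · right
    have : step n (w * s n i) w := ⟨a, b, hab, by simpa [hs] using h, by simp [hs, mul_assoc]⟩
    exact ⟨this, by have := step_len this; omega⟩

theorem le'_sub {n : ℕ} {x y : Equiv.Perm (Fin n)} (h : le' n x y) :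
    ∀ l, wordProd n l = y → ∃ t : List (Fin (n - 1)), t.Sublist l ∧ wordProd n t = x := by
  induction h with
  | refl => exact fun l hl => ⟨l, List.Sublist.refl _, hl⟩
  | tail _ h ih =>
    rintro l rfl
    obtain ⟨a, b, hab, h, e⟩ := step_back h
    obtain ⟨t, h1, _, h2⟩ := exch n l a b hab h
    obtain ⟨t', h3, h4⟩ := ih t (h2.trans e.symm)
    exact ⟨t', h3.trans h1, h4⟩

theorem step_mul_s {n : ℕ} {x y : Equiv.Perm (Fin n)} (h : step n x y) (i : Fin (n - 1)) :
    x * s n i = y ∨ step n (x * s n i) (y * s n i) := by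
  obtain ⟨a, b, hab, h, rfl⟩ := h
  by_cases hs : s n i b < s n i a
  · left
    obtain ⟨h1, h2⟩ := s_flip n i a b hab hs
    congr 1
    unfold s; congr 1 <;> apply Fin.ext <;> simp [h1, h2]
  · right
    have hne : s n i a ≠ s n i b := fun h => hab.ne ((s n i).injective h)
    refine ⟨s n i a, s n i b, lt_of_le_of_ne (not_lt.mp hs) hne, ?_, ?_⟩
    · have e : ∀ c, s n i (s n i c) = c := fun c => by
        rw [← Equiv.Perm.mul_apply, s_mul_s]; rfl
      simpa [e] using h
    · have e : ∀ c, s n i (s n i c) = c := fun c => by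
        rw [← Equiv.Perm.mul_apply, s_mul_s]; rfl
      rw [mul_assoc, mul_assoc, Equiv.mul_swap_eq_swap_mul, e, e]

theorem le'_mul_s {n : ℕ} {x u : Equiv.Perm (Fin n)} (h : le' n x u) (i : Fin (n - 1)) :
    le' n (x * s n i) u ∨ le' n (x * s n i) (u * s n i) := by
  induction h using Relation.ReflTransGen.head_induction_on with
  | refl => exact Or.inr Relation.ReflTransGen.refl
  | head h h' ih =>
    rcases step_mul_s h i with e | e
    · left; rw [e]; exact h'
    · exact ih.imp (Relation.ReflTransGen.head e) (Relation.ReflTransGen.head e)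

theorem le'_mul_s_of_up {n : ℕ} {x u : Equiv.Perm (Fin n)} (h : le' n x u) (i : Fin (n - 1))
    (hu : step n u (u * s n i)) : le' n (x * s n i) (u * s n i) :=
  (le'_mul_s h i).elim (fun h => h.tail hu) id

theorem sub_le' (n : ℕ) (l : List (Fin (n - 1))) :
    l.length = len n (wordProd n l) → ∀ t : List (Fin (n - 1)), t.Sublist l →
      le' n (wordProd n t) (wordProd n l) := by
  induction l using List.reverseRecOn with
  | nil => intro _ t ht; rw [List.sublist_nil.mp ht]; exact Relation.ReflTransGen.refl
  | append_singleton l i ih =>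
    intro hl t ht
    have h1 := len_le n l
    rw [wordProd_snoc] at hl ⊢
    have h2 := len_mul_s_le n (wordProd n l) i
    have h3 : (l ++ [i]).length = l.length + 1 := by simp
    rcases s_cases n (wordProd n l) i with ⟨hs, h⟩ | ⟨hs, h⟩
    · have ih := ih (by omega)
      obtain ⟨t1, t2, rfl, ht1, ht2⟩ := List.sublist_append_iff.mp ht
      rcases List.sublist_singleton.mp ht2 with rfl | rfl
      · rw [List.append_nil]; exact (ih t1 ht1).tail hs
      · rw [wordProd_snoc]; exact le'_mul_s_of_up (ih t1 ht1) i hs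
    · omega

theorem bruhatLE_iff {n : ℕ} {x y : Equiv.Perm (Fin n)} : bruhatLE n x y ↔ le' n x y := by
  constructor
  · rintro ⟨l, h1, rfl, t, h2, rfl⟩
    exact sub_le' n l h1 t h2
  · intro h
    obtain ⟨l, h1, h2⟩ := exists_reduced n y
    exact ⟨l, h1, h2, le'_sub h l h2⟩

theorem lt_len {n : ℕ} {x y : Equiv.Perm (Fin n)} (h : bruhatLT n x y) :
    len n x < len n y :=
  (le'_len (bruhatLE_iff.mp h.1)).resolve_left h.2

theorem lt_of_le'_len {n : ℕ} {x y : Equiv.Perm (Fin n)} (h : le' n x y)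
    (h' : len n x < len n y) : bruhatLT n x y :=
  ⟨bruhatLE_iff.mpr h, fun e => by rw [e] at h'; omega⟩

theorem lt_trans' {n : ℕ} {x y z : Equiv.Perm (Fin n)} (h : bruhatLT n x y)
    (h' : bruhatLT n y z) : bruhatLT n x z :=
  lt_of_le'_len ((bruhatLE_iff.mp h.1).trans (bruhatLE_iff.mp h'.1))
    ((lt_len h).trans (lt_len h'))

theorem exists_descent {n : ℕ} (w : Equiv.Perm (Fin n)) (hw : w ≠ 1) :
    ∃ u i, w = u * s n i ∧ step n u w ∧ len n w = len n u + 1 := by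
  obtain ⟨l, h1, rfl⟩ := exists_reduced n w
  rcases List.eq_nil_or_concat' l with rfl | ⟨m, i, rfl⟩
  · exact absurd rfl hw
  · refine ⟨wordProd n m, i, wordProd_snoc _ _ _, ?_⟩
    have := len_le n m
    rw [wordProd_snoc] at *
    have h3 : (m ++ [i]).length = m.length + 1 := by simp
    rcases s_cases n (wordProd n m) i with h | h
    · exact h
    · omega

/-! ### The coefficient fact -/

theorem aeval_q_inj : Function.Injective (Polynomial.aeval q : Polynomial ℤ →ₐ[ℤ] K) := by
  have : ∀ p : Polynomial ℤ, Polynomial.aeval q p =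
      algebraMap (Polynomial ℂ) K (p.map (Int.castRingHom ℂ)) := by
    intro p
    induction p using Polynomial.induction_on' with
    | add p r hp hr => simp [hp, hr]
    | monomial k a => simp [q, ← Polynomial.C_mul_X_pow_eq_monomial]
  intro a b h
  rw [this, this] at h
  exact Polynomial.map_injective _ Int.cast_injective (RatFunc.algebraMap_injective ℂ h)

theorem q_ne_zero : q ≠ 0 := RatFunc.X_ne_zero

theorem coeff_zero (barK : K →+* K) (hq : barK q = q⁻¹) (f : Polynomial ℤ)
    (h : barK (q * Polynomial.aeval q f) = q * Polynomial.aeval q f) : f = 0 := by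
  set g := Polynomial.X * f with hg
  have h1 : q * Polynomial.aeval q f = Polynomial.aeval q g := by simp [hg]
  have hb : barK (Polynomial.aeval q g) = Polynomial.aeval q⁻¹ g := by
    rw [← hq]
    rw [Polynomial.aeval_def, Polynomial.aeval_def, Polynomial.hom_eval₂]
    congr 1
    exact RingHom.ext_int _ _
  rw [h1, hb] at h
  by_contra hf
  have hg0 : g ≠ 0 := mul_ne_zero Polynomial.X_ne_zero hf
  letI : Invertible (q⁻¹ : K) := ⟨q, mul_inv_cancel₀ q_ne_zero, inv_mul_cancel₀ q_ne_zero⟩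
  have h2 : Polynomial.aeval q g.reverse * q⁻¹ ^ g.natDegree = Polynomial.aeval q⁻¹ g :=
    Polynomial.eval₂_reverse_mul_pow (algebraMap ℤ K) q⁻¹ g
  have h3 : Polynomial.aeval q g.reverse
      = Polynomial.aeval q (g * Polynomial.X ^ g.natDegree) := by
    rw [map_mul, ← h, ← h2, map_pow, Polynomial.aeval_X, mul_assoc, ← mul_pow,
      inv_mul_cancel₀ q_ne_zero, one_pow, mul_one]
  have h4 := congrArg Polynomial.natDegree (aeval_q_inj h3)
  rw [Polynomial.natDegree_mul_X_pow _ hg0] at h4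
  have h5 := Polynomial.reverse_natDegree_le g
  have h6 : g.natDegree = f.natDegree + 1 := Polynomial.natDegree_X_mul hf
  omega

/-! ### Lattices -/

section Hecke

variable {n : ℕ} {A : Type} [Ring A] [Algebra K A]

/-- `Z` is a `ℤ[q]`-combination of the `H y` with `y ≺ w`. -/
def inN (H : Equiv.Perm (Fin n) → A) (w : Equiv.Perm (Fin n)) (Z : A) : Prop :=
  ∃ P : Equiv.Perm (Fin n) → Polynomial ℤ,
    (∀ y, ¬ bruhatLT n y w → P y = 0) ∧ Z = ∑ y, Polynomial.aeval q (P y) • H y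

theorem inN_zero (H : Equiv.Perm (Fin n) → A) (w) : inN H w 0 :=
  ⟨0, by simp, by simp⟩

theorem inN_add {H : Equiv.Perm (Fin n) → A} {w} {Y Z : A} (hY : inN H w Y) (hZ : inN H w Z) :
    inN H w (Y + Z) := by
  obtain ⟨P, hP, rfl⟩ := hY
  obtain ⟨Q, hQ, rfl⟩ := hZ
  refine ⟨P + Q, fun y hy => by simp [hP y hy, hQ y hy], ?_⟩
  simp [add_smul, Finset.sum_add_distrib]

theorem inN_smul {H : Equiv.Perm (Fin n) → A} {w} {Z : A} (p : Polynomial ℤ)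
    (hZ : inN H w Z) : inN H w (Polynomial.aeval q p • Z) := by
  obtain ⟨Q, hQ, rfl⟩ := hZ
  refine ⟨fun y => p * Q y, fun y hy => by simp [hQ y hy], ?_⟩
  simp [mul_smul, Finset.smul_sum]

theorem inN_neg {H : Equiv.Perm (Fin n) → A} {w} {Z : A}
    (hZ : inN H w Z) : inN H w (-Z) := by
  have := inN_smul (-1) hZ
  simpa using this

theorem inN_zsmul {H : Equiv.Perm (Fin n) → A} {w} {Z : A} (k : ℤ)
    (hZ : inN H w Z) : inN H w (k • Z) := by
  have := inN_smul (Polynomial.C k) hZ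
  simpa [← Int.cast_smul_eq_zsmul K] using this

theorem inN_sum {ι : Type*} {H : Equiv.Perm (Fin n) → A} {w} (t : Finset ι) (f : ι → A)
    (h : ∀ i ∈ t, inN H w (f i)) : inN H w (∑ i ∈ t, f i) :=
  Finset.sum_induction f (inN H w) (fun _ _ => inN_add) (inN_zero H w) h

theorem inN_mono {H : Equiv.Perm (Fin n) → A} {v w} {Z : A} (hvw : bruhatLT n v w)
    (hZ : inN H v Z) : inN H w Z := by
  obtain ⟨Q, hQ, rfl⟩ := hZ
  exact ⟨Q, fun y hy => hQ y fun h => hy (lt_trans' h hvw), rfl⟩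

theorem inN_single {H : Equiv.Perm (Fin n) → A} {v w} (hvw : bruhatLT n v w) :
    inN H w (H v) := by
  refine ⟨fun y => if y = v then 1 else 0, ?_, ?_⟩
  · intro y hy
    exact if_neg (by rintro rfl; exact hy hvw)
  · rw [Finset.sum_eq_single v]
    · simp
    · intro b _ hb; simp [hb]
    · simp

variable (H : Equiv.Perm (Fin n) → A)

theorem H_mul
    (hmul : ∀ (w : Equiv.Perm (Fin n)) (i : Fin (n - 1)),
      len n (w * s n i) = len n w + 1 → H (w * s n i) = H w * H (s n i))
    (hquad : ∀ i : Fin (n - 1),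
      H (s n i) * H (s n i) = (q⁻¹ - q) • H (s n i) + 1)
    (y : Equiv.Perm (Fin n)) (i : Fin (n - 1)) :
    H y * (H (s n i) + q • 1) = H (y * s n i) + q • H y ∨
    H y * (H (s n i) + q • 1) = H (y * s n i) + q⁻¹ • H y := by
  rcases s_cases n y i with ⟨_, h⟩ | ⟨_, h⟩
  · left
    rw [hmul y i h, mul_add, mul_smul_comm, mul_one]
  · right
    have h1 := hmul (y * s n i) i (by rw [mul_s_s]; exact h)
    rw [mul_s_s] at h1
    rw [mul_add, mul_smul_comm, mul_one]
    nth_rw 1 [h1]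
    rw [mul_assoc, hquad, mul_add, mul_smul_comm, ← h1, sub_smul, mul_one]
    abel

theorem key
    (hmul : ∀ (w : Equiv.Perm (Fin n)) (i : Fin (n - 1)),
      len n (w * s n i) = len n w + 1 → H (w * s n i) = H w * H (s n i))
    (hquad : ∀ i : Fin (n - 1),
      H (s n i) * H (s n i) = (q⁻¹ - q) • H (s n i) + 1)
    (u : Equiv.Perm (Fin n)) (i : Fin (n - 1))
    (hu : step n u (u * s n i)) (hl : len n (u * s n i) = len n u + 1) (Z : A)
    (hZ : inN H u Z) : inN H (u * s n i) (q • (Z * (H (s n i) + q • 1))) := by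
  obtain ⟨P, hP, rfl⟩ := hZ
  rw [Finset.sum_mul, Finset.smul_sum]
  refine inN_sum _ _ fun y _ => ?_
  by_cases hy : bruhatLT n y u
  swap
  · rw [hP y hy]; simpa using inN_zero _ _
  rw [smul_mul_assoc, smul_comm]
  refine inN_smul _ ?_
  have hyu : bruhatLT n y (u * s n i) :=
    lt_trans' hy (lt_of_le'_len (Relation.ReflTransGen.single hu) (by omega))
  have hys : bruhatLT n (y * s n i) (u * s n i) := by
    refine lt_of_le'_len (le'_mul_s_of_up (bruhatLE_iff.mp hy.1) i hu) ?_
    have := len_mul_s_le n y i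
    have := lt_len hy
    omega
  have hq : ∀ Y : A, inN H (u * s n i) Y → inN H (u * s n i) (q • Y) := fun Y hY => by
    simpa using inN_smul Polynomial.X hY
  rcases H_mul H hmul hquad y i with h | h <;> rw [h, smul_add]
  · exact inN_add (hq _ (inN_single hys)) (hq _ (hq _ (inN_single hyu)))
  · rw [smul_smul, mul_inv_cancel₀ q_ne_zero, one_smul]
    exact inN_add (hq _ (inN_single hys)) (inN_single hyu)

theorem exists_C
    (hone : H 1 = 1)
    (hmul : ∀ (w : Equiv.Perm (Fin n)) (i : Fin (n - 1)),
      len n (w * s n i) = len n w + 1 → H (w * s n i) = H w * H (s n i))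
    (hquad : ∀ i : Fin (n - 1),
      H (s n i) * H (s n i) = (q⁻¹ - q) • H (s n i) + 1)
    (barK : K →+* K) (hbarKq : barK q = q⁻¹)
    (bar : A →+* A)
    (hbar_smul : ∀ (c : K) (x : A), bar (c • x) = barK c • bar x)
    (hbarH : ∀ w : Equiv.Perm (Fin n),
      bar (H w) * H w⁻¹ = 1 ∧ H w⁻¹ * bar (H w) = 1) (k : ℕ) :
    ∀ w, len n w = k → ∃ C Z : A, bar C = C ∧ inN H w Z ∧ C = H w + q • Z := by
  induction k using Nat.strong_induction_on with
  | _ k ih =>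
  rintro w rfl
  by_cases hw : w = 1
  · subst hw
    exact ⟨1, 0, map_one _, inN_zero _ _, by simp [hone]⟩
  obtain ⟨u, i, rfl, hu, hl⟩ := exists_descent w hw
  have hbs : bar (H (s n i) + q • 1) = H (s n i) + q • 1 := by
    have h1 := (hbarH (s n i)).1
    rw [s_inv] at h1
    have h2 : H (s n i) * (H (s n i) - (q⁻¹ - q) • 1) = 1 := by
      rw [mul_sub, hquad, mul_smul_comm, mul_one]; abel
    have h3 : bar (H (s n i)) = H (s n i) - (q⁻¹ - q) • 1 := left_inv_eq_right_inv h1 h2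
    rw [map_add, hbar_smul, hbarKq, map_one, h3, sub_smul]; abel
  obtain ⟨C, Z, hC, hZ, hCZ⟩ := ih (len n u) (by omega) u rfl
  set w := u * s n i with hwdef
  have huw : bruhatLT n u w := lt_of_le'_len (Relation.ReflTransGen.single hu) (by omega)
  have hX : inN H w (C * (H (s n i) + q • 1) - H w) := by
    rw [hCZ, add_mul, mul_add, ← hmul u i hl, ← hwdef, mul_smul_comm, mul_one, smul_mul_assoc]
    have h1 := key H hmul hquad u i hu hl Z hZ
    have h2 : inN H w (q • H u) := by
      simpa using inN_smul Polynomial.X (inN_single (H := H) huw)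
    have := inN_add h2 h1
    convert this using 1
    abel
  obtain ⟨P, hP, hXP⟩ := hX
  have ih' : ∀ y, ∃ C Z : A, bruhatLT n y w → (bar C = C ∧ inN H y Z ∧ C = H y + q • Z) := by
    intro y
    by_cases hy : bruhatLT n y w
    · obtain ⟨C, Z, h⟩ := ih (len n y) (lt_len hy) y rfl
      exact ⟨C, Z, fun _ => h⟩
    · exact ⟨0, 0, fun h => absurd h hy⟩
  choose D E hDE using ih'
  refine ⟨C * (H (s n i) + q • 1) - ∑ y, (P y).coeff 0 • D y,
    ∑ y, (Polynomial.aeval q (P y).divX • H y - (P y).coeff 0 • E y), ?_, ?_, ?_⟩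
  · rw [map_sub, map_mul, hbs, hC, map_sum]
    congr 1
    refine Finset.sum_congr rfl fun y _ => ?_
    rw [map_zsmul]
    by_cases hy : bruhatLT n y w
    · rw [(hDE y hy).1]
    · simp [hP y hy]
  · refine inN_sum _ _ fun y _ => ?_
    by_cases hy : bruhatLT n y w
    · rw [sub_eq_add_neg]
      exact inN_add (inN_smul _ (inN_single hy))
        (inN_neg (inN_zsmul _ (inN_mono hy (hDE y hy).2.1)))
    · simpa [hP y hy] using inN_zero _ _
  · rw [sub_eq_iff_eq_add] at hXP
    rw [hXP, Finset.smul_sum, add_comm _ (H w), add_sub_assoc, ← Finset.sum_sub_distrib]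
    congr 1
    refine Finset.sum_congr rfl fun y _ => ?_
    by_cases hy : bruhatLT n y w
    · rw [(hDE y hy).2.2]
      have h1 : Polynomial.aeval q (P y) =
          q * Polynomial.aeval q (P y).divX + ((P y).coeff 0 : K) := by
        conv_lhs => rw [← Polynomial.X_mul_divX_add (P y)]
        simp
      rw [h1, add_smul, mul_smul, Int.cast_smul_eq_zsmul, smul_sub, smul_add,
        smul_comm q ((P y).coeff 0)]
      abel
    · simp [hP y hy]

/-- elements of length less than `k` -/
def F (H : Equiv.Perm (Fin n) → A) (k : ℕ) : Submodule K A :=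
  Submodule.span K (H '' {y | len n y < k})

theorem F_mono (H : Equiv.Perm (Fin n) → A) {j k : ℕ} (h : j ≤ k) : F H j ≤ F H k :=
  Submodule.span_mono (Set.image_mono fun _ hy => lt_of_lt_of_le hy h)

theorem mem_F (H : Equiv.Perm (Fin n) → A) {y} {k : ℕ} (h : len n y < k) : H y ∈ F H k :=
  Submodule.subset_span ⟨y, h, rfl⟩

theorem inN_F {H : Equiv.Perm (Fin n) → A} {w} {Z : A} (h : inN H w Z) :
    Z ∈ F H (len n w) := by
  obtain ⟨P, hP, rfl⟩ := h
  refine Submodule.sum_mem _ fun y _ => ?_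
  by_cases hy : bruhatLT n y w
  · exact Submodule.smul_mem _ _ (mem_F H (lt_len hy))
  · simp [hP y hy]

theorem bar_F (barK : K →+* K) (bar : A →+* A)
    (hbar_smul : ∀ (c : K) (x : A), bar (c • x) = barK c • bar x)
    (hC : ∀ w, ∃ C Z : A, bar C = C ∧ inN H w Z ∧ C = H w + q • Z) (k : ℕ) :
    (∀ x ∈ F H k, bar x ∈ F H k) ∧ ∀ w, len n w = k → bar (H w) - H w ∈ F H k := by
  induction k using Nat.strong_induction_on with
  | _ k ih =>
  have h1 : ∀ x ∈ F H k, bar x ∈ F H k := by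
    intro x hx
    induction hx using Submodule.span_induction with
    | mem x hx =>
      obtain ⟨y, hy, rfl⟩ := hx
      have := F_mono H (le_of_lt hy) ((ih _ hy).2 y rfl)
      have h2 := Submodule.add_mem _ this (mem_F H hy)
      simpa using h2
    | zero => simp
    | add x y _ _ hx hy => rw [map_add]; exact Submodule.add_mem _ hx hy
    | smul c x _ hx => rw [hbar_smul]; exact Submodule.smul_mem _ _ hx
  refine ⟨h1, ?_⟩
  rintro w rfl
  obtain ⟨C, Z, hb, hZ, e⟩ := hC w
  have hq := Submodule.smul_mem _ q (inN_F hZ)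
  have e2 : H w = C - q • Z := by rw [e]; abel
  have : bar (H w) - H w = q • Z - bar (q • Z) := by
    rw [e2, map_sub, hb]; abel
  rw [this]
  exact Submodule.sub_mem _ hq (h1 _ hq)

theorem basis_of_tri (hLI : LinearIndependent K H)
    (hspan : Submodule.span K (Set.range H) = ⊤) (C : Equiv.Perm (Fin n) → A)
    (hC : ∀ w, C w - H w ∈ F H (len n w)) :
    LinearIndependent K C ∧ Submodule.span K (Set.range C) = ⊤ := by
  have h1 : ∀ k, ∀ w, len n w = k → H w ∈ Submodule.span K (Set.range C) := by
    intro k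
    induction k using Nat.strong_induction_on with
    | _ k ih =>
    rintro w rfl
    have h2 : F H (len n w) ≤ Submodule.span K (Set.range C) := by
      refine Submodule.span_le.mpr ?_
      rintro _ ⟨y, hy, rfl⟩
      exact ih _ hy y rfl
    have := Submodule.sub_mem _ (Submodule.subset_span (Set.mem_range_self w)) (h2 (hC w))
    simpa using this
  have h2 : Submodule.span K (Set.range C) = ⊤ := by
    rw [← top_le_iff, ← hspan, Submodule.span_le]
    rintro _ ⟨w, rfl⟩
    exact h1 _ w rfl
  refine ⟨linearIndependent_of_top_le_span_of_card_eq_finrank h2.ge ?_, h2⟩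
  exact (Module.finrank_eq_card_basis (Module.Basis.mk hLI hspan.ge)).symm

theorem unique_zero (hLI : LinearIndependent K H)
    (barK : K →+* K) (hbarKq : barK q = q⁻¹)
    (bar : A →+* A)
    (hbar_smul : ∀ (c : K) (x : A), bar (c • x) = barK c • bar x)
    (hF : ∀ w, bar (H w) - H w ∈ F H (len n w))
    (f : Equiv.Perm (Fin n) → Polynomial ℤ)
    (hb : bar (∑ y, (q * Polynomial.aeval q (f y)) • H y)
      = ∑ y, (q * Polynomial.aeval q (f y)) • H y) : f = 0 := by
  by_contra hf
  obtain ⟨y0, hy0⟩ : ∃ y, f y ≠ 0 := by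
    by_contra h; push Not at h; exact hf (funext h)
  obtain ⟨w, hw, hmax⟩ := Finset.exists_max_image (Finset.univ.filter fun y => f y ≠ 0)
    (len n) ⟨y0, by simpa using hy0⟩
  simp only [Finset.mem_filter, Finset.mem_univ, true_and] at hw hmax
  apply hw
  -- every coefficient of maximal length is bar invariant
  set g : Equiv.Perm (Fin n) → K := fun y => q * Polynomial.aeval q (f y) with hg
  have hsum : ∑ y, (barK (g y) - g y) • H y ∈ F H (len n w) := by
    have e : ∑ y, (barK (g y) - g y) • H y = - ∑ y, barK (g y) • (bar (H y) - H y) := by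
      have hb' : ∑ y, barK (g y) • bar (H y) = ∑ y, g y • H y := by
        rw [← hb, map_sum]; simp only [hbar_smul]; rfl
      simp only [sub_smul, smul_sub, Finset.sum_sub_distrib, hb']
      abel
    rw [e]
    refine Submodule.neg_mem _ (Submodule.sum_mem _ fun y _ => ?_)
    by_cases hy : f y = 0
    · simp [hg, hy]
    · exact Submodule.smul_mem _ _ (F_mono H (hmax y hy) (hF y))
  have hz : barK (g w) - g w = 0 := by
    by_contra hc
    have hr : ∀ c : Equiv.Perm (Fin n) → K, ∑ y, c y • H y ∈ F H (len n w) → c w = 0 := by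
      intro c h
      have hFin : Finsupp.linearCombination K H (Finsupp.equivFunOnFinite.symm c)
          = ∑ y, c y • H y := by
        rw [Finsupp.linearCombination_apply, Finsupp.sum_fintype] <;> simp
      rw [← hFin, F, Finsupp.mem_span_image_iff_linearCombination] at h
      obtain ⟨l, hl, e'⟩ := h
      have := hLI e'
      rw [Finsupp.mem_supported] at hl
      have hn : l w = 0 := by
        by_contra h0
        have := hl (Finsupp.mem_support_iff.mpr h0)
        simp at this
      rw [this] at hn
      simpa using hn
    exact hc (hr (fun y => barK (g y) - g y) hsum)
  exact coeff_zero barK hbarKq (f w) (sub_eq_zero.mp hz)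

end Hecke

end KL

/-- There exists a unique basis `{H̲_w : w ∈ S_n}` of the Hecke algebra
`H_n` consisting of bar-invariant elements such that
`H̲_w = H_w + Σ_{w' ≺ w} P_{w',w}(q)·H_{w'}` with `P_{w',w} ∈ q·ℤ[q]` for every `w' ≺ w`. -/
theorem statement0 (n : ℕ) (A : Type) [Ring A] [Algebra K A]
    (H : Equiv.Perm (Fin n) → A)
    (hLI : LinearIndependent K H)
    (hspan : Submodule.span K (Set.range H) = ⊤)
    (hone : H 1 = 1)
    (hmul : ∀ (w : Equiv.Perm (Fin n)) (i : Fin (n - 1)),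
      len n (w * s n i) = len n w + 1 → H (w * s n i) = H w * H (s n i))
    (hquad : ∀ i : Fin (n - 1),
      H (s n i) * H (s n i) = (q⁻¹ - q) • H (s n i) + 1)
    (barK : K →+* K) (hbarKq : barK q = q⁻¹)
    (hbarKc : ∀ z : ℂ, barK (algebraMap ℂ K z) = algebraMap ℂ K z)
    (bar : A →+* A)
    (hbar_smul : ∀ (c : K) (x : A), bar (c • x) = barK c • bar x)
    (hbarH : ∀ w : Equiv.Perm (Fin n),
      bar (H w) * H w⁻¹ = 1 ∧ H w⁻¹ * bar (H w) = 1) :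
    ∃! C : Equiv.Perm (Fin n) → A,
      (LinearIndependent K C ∧ Submodule.span K (Set.range C) = ⊤) ∧
      (∀ w, bar (C w) = C w) ∧
      (∀ w, ∃ P : Equiv.Perm (Fin n) → Polynomial ℤ,
        (∀ w', ¬ bruhatLT n w' w → P w' = 0) ∧
        C w = H w + ∑ w' : Equiv.Perm (Fin n),
          (q * Polynomial.aeval q (P w')) • H w') := by
  have hex := fun w => KL.exists_C H hone hmul hquad barK hbarKq bar hbar_smul hbarH _ w rfl
  have hF := fun w => (KL.bar_F H barK bar hbar_smul hex _).2 w rfl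
  choose C Z hCb hCZ hCe using hex
  refine ⟨C, ⟨?_, hCb, ?_⟩, ?_⟩
  · refine KL.basis_of_tri H hLI hspan C fun w => ?_
    rw [hCe w, add_sub_cancel_left]
    exact Submodule.smul_mem _ _ (KL.inN_F (hCZ w))
  · intro w
    obtain ⟨P, hP, e⟩ := hCZ w
    refine ⟨P, hP, ?_⟩
    rw [hCe w, e, Finset.smul_sum]
    simp only [mul_smul]
  · rintro D ⟨-, hDb, hD⟩
    funext w
    obtain ⟨P, -, hPe⟩ := hD w
    obtain ⟨Q, -, hQ⟩ := hCZ w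
    have e : D w - C w = ∑ y, (q * Polynomial.aeval q ((P - Q) y)) • H y := by
      rw [hPe, hCe w, hQ, Finset.smul_sum]
      simp only [Pi.sub_apply, map_sub, mul_sub, sub_smul, Finset.sum_sub_distrib, mul_smul]
      abel
    have h0 := KL.unique_zero H hLI barK hbarKq bar hbar_smul hF (P - Q) (by
      rw [← e, map_sub, hDb, hCb])
    rw [h0] at e
    exact sub_eq_zero.mp (e.trans (by simp))
end
end

section
/- There exists a unique basis {N̲_w : w ∈ W^{p+q}} of the mixed induced module M^p_q consisting of bar-invariant elements such that N̲_w = N_w + Σ_{w' ≺ w} R_{w',w}(q)·N_{w'} with R_{w',w} ∈ q·ℤ[q] for all w' ≺ w. -/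
/-!
STATEMENT 1: Existence and uniqueness of the canonical basis of the mixed induced
Hecke module `M^p_q`.

The Hecke algebra `H_n` is encoded as a `ℂ(q)`-algebra `A` with its standard basis `H`,
and the mixed induced module `M^p_q` is encoded as a `ℂ(q)`-vector space `M` with a
right `A`-action `act`, a cyclic vector `N 1` on which the generators `H_i` for `i ∈ P`
(resp. `i ∈ Q`) act by `-q` (resp. `q⁻¹`), with standard basis `N w = N 1 · H_w` indexed
by the shortest coset representatives `w ∈ W^{p+q}`, and a bar involution `barM`
compatible with the bar involution of `A` and fixing `N 1`.
-/

open scoped Classical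

noncomputable section

/-- The parabolic subgroup of `S_n` generated by the simple transpositions indexed by `P`. -/
def parab (n : ℕ) (P : Finset (Fin (n - 1))) : Subgroup (Equiv.Perm (Fin n)) :=
  Subgroup.closure {σ | ∃ i ∈ P, σ = s n i}

/-- `w` is a shortest coset representative for `W_P \ S_n`. -/
def IsShort (n : ℕ) (P : Finset (Fin (n - 1))) (w : Equiv.Perm (Fin n)) : Prop :=
  ∀ x ∈ parab n P, len n w ≤ len n (x * w)

namespace HeckeAux

def lo {n : ℕ} (i : Fin (n - 1)) : Fin n := ⟨(i : ℕ), by have := i.isLt; omega⟩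
def hi {n : ℕ} (i : Fin (n - 1)) : Fin n := ⟨(i : ℕ) + 1, by have := i.isLt; omega⟩

lemma s_eq {n : ℕ} (i : Fin (n - 1)) : s n i = Equiv.swap (lo i) (hi i) := rfl

lemma lo_lt_hi {n : ℕ} (i : Fin (n - 1)) : lo i < hi i := by
  simp [lo, hi, Fin.lt_def]

lemma s_lo {n : ℕ} (i : Fin (n - 1)) : s n i (lo i) = hi i := by simp [s_eq]
lemma s_hi {n : ℕ} (i : Fin (n - 1)) : s n i (hi i) = lo i := by simp [s_eq]
lemma s_mul_s {n : ℕ} (i : Fin (n - 1)) : s n i * s n i = 1 := by simp [s_eq]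
lemma s_inv {n : ℕ} (i : Fin (n - 1)) : (s n i)⁻¹ = s n i := by simp [s_eq]

lemma s_lt {n : ℕ} (i : Fin (n - 1)) {x y : Fin n} (h : x < y) :
    s n i x < s n i y ∨ (x = lo i ∧ y = hi i) := by
  rw [s_eq, Equiv.swap_apply_def, Equiv.swap_apply_def]
  simp only [lo, hi, Fin.ext_iff, Fin.lt_def] at *
  split_ifs <;> (try simp only []) <;> omega

lemma wordProd_cons {n : ℕ} (i : Fin (n - 1)) (l) :
    wordProd n (i :: l) = s n i * wordProd n l := by simp [wordProd]
lemma wordProd_append {n : ℕ} (l : List (Fin (n - 1))) (i) :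
    wordProd n (l ++ [i]) = wordProd n l * s n i := by simp [wordProd]

lemma exchange {n : ℕ} (l : List (Fin (n - 1))) (a b : Fin n) (hab : a < b)
    (h : wordProd n l b < wordProd n l a) :
    ∃ l' : List (Fin (n - 1)), l'.Sublist l ∧ l'.length + 1 = l.length ∧
      wordProd n l' = wordProd n l * Equiv.swap a b := by
  induction l with
  | nil => simp [wordProd] at h; exact absurd h (not_lt.2 hab.le)
  | cons i l ih =>
    rw [wordProd_cons] at h ⊢
    by_cases h1 : wordProd n l b < wordProd n l a
    · obtain ⟨l', h2, h3, h4⟩ := ih h1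
      refine ⟨i :: l', h2.cons_cons i, by simp [h3], ?_⟩
      rw [wordProd_cons, h4, mul_assoc]
    · have h2 : wordProd n l a < wordProd n l b := by
        refine lt_of_le_of_ne (not_lt.1 h1) ?_
        intro e
        exact hab.ne ((wordProd n l).injective e)
      rcases s_lt i h2 with h3 | ⟨h3, h4⟩
      · exact absurd h (not_lt.2 h3.le)
      · refine ⟨l, List.sublist_cons_self i l, by simp, ?_⟩
        rw [mul_assoc, Equiv.mul_swap_eq_swap_mul, h3, h4, ← s_eq, ← mul_assoc, s_mul_s, one_mul]

lemma exists_word {n : ℕ} (w : Equiv.Perm (Fin n)) : ∃ l, wordProd n l = w := by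
  cases n with
  | zero => exact ⟨[], Subsingleton.elim _ _⟩
  | succ n =>
    have h : w ∈ Submonoid.closure
        (Set.range fun i : Fin n ↦ Equiv.swap i.castSucc i.succ) := by
      rw [Equiv.Perm.mclosure_swap_castSucc_succ]; trivial
    induction h using Submonoid.closure_induction with
    | mem x hx =>
      obtain ⟨i, rfl⟩ := hx
      exact ⟨[i], by simp [wordProd]; rfl⟩
    | one => exact ⟨[], rfl⟩
    | mul x y _ _ hx hy =>
      obtain ⟨l, rfl⟩ := hx
      obtain ⟨l', rfl⟩ := hy
      exact ⟨l ++ l', by simp [wordProd]⟩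

lemma len_le {n : ℕ} (l : List (Fin (n - 1))) : len n (wordProd n l) ≤ l.length :=
  Nat.sInf_le ⟨l, rfl, rfl⟩

lemma exists_reduced {n : ℕ} (w : Equiv.Perm (Fin n)) :
    ∃ l : List (Fin (n - 1)), l.length = len n w ∧ wordProd n l = w := by
  have := Nat.sInf_mem (s := {k | ∃ l : List (Fin (n - 1)), l.length = k ∧ wordProd n l = w})
    (by obtain ⟨l, hl⟩ := exists_word w; exact ⟨_, l, rfl, hl⟩)
  exact this

lemma len_mul_le {n : ℕ} (w : Equiv.Perm (Fin n)) (i) : len n (w * s n i) ≤ len n w + 1 := by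
  obtain ⟨l, h, rfl⟩ := exists_reduced w
  rw [← h, ← wordProd_append]
  exact (len_le _).trans (by simp)

def step {n : ℕ} (u w : Equiv.Perm (Fin n)) : Prop :=
  ∃ a b, a < b ∧ u a < u b ∧ w = u * Equiv.swap a b

def le {n : ℕ} : Equiv.Perm (Fin n) → Equiv.Perm (Fin n) → Prop := Relation.ReflTransGen step

lemma le_tr {n : ℕ} {u v w : Equiv.Perm (Fin n)} (h : le u v) (h' : le v w) : le u w :=
  Relation.ReflTransGen.trans h h'

lemma step.le {n : ℕ} {u v : Equiv.Perm (Fin n)} (h : step u v) : le u v :=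
  Relation.ReflTransGen.single h

lemma step.word {n : ℕ} {u : Equiv.Perm (Fin n)} {l : List (Fin (n - 1))}
    (h : step u (wordProd n l)) : ∃ l' : List (Fin (n - 1)), l'.Sublist l ∧
      l'.length + 1 = l.length ∧ wordProd n l' = u := by
  obtain ⟨a, b, hab, hu, hw⟩ := h
  obtain ⟨l', h1, h2, h3⟩ := exchange l a b hab (by rw [hw]; simpa using hu)
  exact ⟨l', h1, h2, by rw [h3, hw]; simp [mul_assoc]⟩

lemma step.len {n : ℕ} {u w : Equiv.Perm (Fin n)} (h : step u w) : len n u < len n w := by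
  obtain ⟨l, h1, rfl⟩ := exists_reduced w
  obtain ⟨l', h2, h3, rfl⟩ := h.word
  have := len_le l'
  omega

lemma le.len {n : ℕ} {u w : Equiv.Perm (Fin n)} (h : le u w) : u = w ∨ len n u < len n w := by
  induction h with
  | refl => exact Or.inl rfl
  | tail _ h ih =>
    right
    rcases ih with rfl | h'
    · exact h.len
    · exact h'.trans h.len

lemma step_s {n : ℕ} {w : Equiv.Perm (Fin n)} {i : Fin (n - 1)} (h : w (lo i) < w (hi i)) :
    step w (w * s n i) := ⟨_, _, lo_lt_hi i, h, rfl⟩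

lemma step_s' {n : ℕ} {w : Equiv.Perm (Fin n)} {i : Fin (n - 1)} (h : w (hi i) < w (lo i)) :
    step (w * s n i) w :=
  ⟨_, _, lo_lt_hi i, by simpa [s_eq] using h, by simp [s_eq, mul_assoc]⟩

lemma lt_or {n : ℕ} (w : Equiv.Perm (Fin n)) (i : Fin (n - 1)) :
    w (lo i) < w (hi i) ∨ w (hi i) < w (lo i) := by
  apply lt_or_gt_of_ne
  intro h
  exact (lo_lt_hi i).ne (w.injective h)

lemma len_up {n : ℕ} {w : Equiv.Perm (Fin n)} {i : Fin (n - 1)} (h : w (lo i) < w (hi i)) :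
    len n (w * s n i) = len n w + 1 := by
  have := (step_s h).len
  have := len_mul_le w i
  omega

lemma len_down {n : ℕ} {w : Equiv.Perm (Fin n)} {i : Fin (n - 1)} (h : w (hi i) < w (lo i)) :
    len n w = len n (w * s n i) + 1 := by
  have h' : (w * s n i) (lo i) < (w * s n i) (hi i) := by simpa [s_eq] using h
  have := len_up h'
  rwa [mul_assoc, s_mul_s, mul_one] at this

lemma step_mul_s {n : ℕ} {u w : Equiv.Perm (Fin n)} (h : step u w) (i : Fin (n - 1)) :
    u * s n i = w ∨ step (u * s n i) (w * s n i) := by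
  obtain ⟨a, b, hab, hu, rfl⟩ := h
  rcases s_lt i hab with h1 | ⟨rfl, rfl⟩
  · right
    refine ⟨_, _, h1, ?_, ?_⟩
    · simpa [s_eq] using hu
    · rw [mul_assoc, mul_assoc, Equiv.mul_swap_eq_swap_mul]
      simp only [s_eq, Equiv.swap_apply_self]
  · exact Or.inl rfl

lemma s_mul_step {n : ℕ} {u w : Equiv.Perm (Fin n)} (h : step u w) (i : Fin (n - 1)) :
    s n i * u = w ∨ step (s n i * u) (s n i * w) := by
  obtain ⟨a, b, hab, hu, rfl⟩ := h
  rcases s_lt i hu with h1 | ⟨h1, h2⟩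
  · right
    exact ⟨a, b, hab, h1, by simp [mul_assoc]⟩
  · left
    rw [Equiv.mul_swap_eq_swap_mul, h1, h2, s_eq]

lemma le_mul_s {n : ℕ} {u w : Equiv.Perm (Fin n)} (h : le u w) (i : Fin (n - 1)) :
    le (u * s n i) w ∨ le (u * s n i) (w * s n i) := by
  induction h with
  | refl => exact Or.inr .refl
  | tail _ h ih =>
    rcases ih with h1 | h1
    · exact Or.inl (h1.tail h)
    · rcases step_mul_s h i with rfl | h2
      · exact Or.inl h1
      · exact Or.inr (h1.tail h2)

lemma s_mul_le {n : ℕ} {u w : Equiv.Perm (Fin n)} (h : le u w) (i : Fin (n - 1)) :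
    le u (s n i * w) ∨ le (s n i * u) (s n i * w) := by
  induction h using Relation.ReflTransGen.head_induction_on with
  | refl => exact Or.inr .refl
  | head h _ ih =>
    rcases ih with h1 | h1
    · exact Or.inl (h1.head h)
    · rcases s_mul_step h i with rfl | h2
      · left
        rwa [← mul_assoc, s_mul_s, one_mul] at h1
      · exact Or.inr (h1.head h2)

lemma le_lift {n : ℕ} {u w : Equiv.Perm (Fin n)} (h : le u w) (i : Fin (n - 1))
    (hw : w (lo i) < w (hi i)) : le (u * s n i) (w * s n i) := by
  rcases le_mul_s h i with h | h
  · exact h.tail (step_s hw)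
  · exact h

lemma le_sub {n : ℕ} {u w : Equiv.Perm (Fin n)} (h : le u w) (l : List (Fin (n - 1)))
    (hl : wordProd n l = w) : ∃ t : List (Fin (n - 1)), t.Sublist l ∧ wordProd n t = u := by
  induction h generalizing l with
  | refl => exact ⟨l, List.Sublist.refl l, hl⟩
  | tail _ h ih =>
    subst hl
    obtain ⟨l', h2, h3, rfl⟩ := h.word
    obtain ⟨t, h4, h5⟩ := ih l' rfl
    exact ⟨t, h4.trans h2, h5⟩

lemma reduced_init {n : ℕ} {l : List (Fin (n - 1))} {i : Fin (n - 1)}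
    (h : (l ++ [i]).length = len n (wordProd n (l ++ [i]))) :
    l.length = len n (wordProd n l) ∧ wordProd n l (lo i) < wordProd n l (hi i) := by
  rw [wordProd_append, List.length_append, List.length_singleton] at h
  have h1 := len_mul_le (wordProd n l) i
  have h2 := len_le l
  refine ⟨by omega, ?_⟩
  rcases lt_or (wordProd n l) i with h3 | h3
  · exact h3
  · have := len_down h3
    omega

lemma sub_le {n : ℕ} (l : List (Fin (n - 1))) (h : l.length = len n (wordProd n l))
    (t : List (Fin (n - 1))) (ht : t.Sublist l) : le (wordProd n t) (wordProd n l) := by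
  induction l using List.reverseRecOn generalizing t with
  | nil => rw [List.sublist_nil] at ht; subst ht; exact .refl
  | append_singleton l i ih =>
    obtain ⟨h1, h2⟩ := reduced_init h
    obtain ⟨t1, t2, rfl, h3, h4⟩ := List.sublist_append_iff.1 ht
    have h5 := ih h1 t1 h3
    rw [wordProd_append]
    rcases List.sublist_singleton.1 h4 with rfl | rfl
    · rw [List.append_nil]
      exact h5.tail (step_s h2)
    · rw [wordProd_append]
      exact le_lift h5 i h2

lemma bruhatLE_iff {n : ℕ} (u w : Equiv.Perm (Fin n)) : bruhatLE n u w ↔ le u w := by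
  constructor
  · rintro ⟨l, h1, rfl, t, h2, rfl⟩
    exact sub_le l h1 t h2
  · intro h
    obtain ⟨l, h1, h2⟩ := exists_reduced w
    exact ⟨l, h1, h2, le_sub h l h2⟩

lemma short_iff {n : ℕ} (J : Finset (Fin (n - 1))) (w : Equiv.Perm (Fin n)) :
    IsShort n J w ↔ ∀ j ∈ J, w⁻¹ (lo j) < w⁻¹ (hi j) := by
  constructor
  · intro h j hj
    have h1 := h (s n j) (Subgroup.subset_closure ⟨j, hj, rfl⟩)
    by_contra h2
    have h3 : w⁻¹ (hi j) < w⁻¹ (lo j) := (lt_or w⁻¹ j).resolve_left h2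
    have h4 : step (s n j * w) w := by
      refine ⟨_, _, h3, ?_, ?_⟩
      · simp [s_eq, lo_lt_hi]
      · rw [Equiv.mul_swap_eq_swap_mul]
        simp [s_eq]
    have := h4.len
    omega
  · intro h x hx
    suffices h' : le w (x * w) by
      rcases h'.len with h1 | h1
      · rw [← h1]
      · exact h1.le
    have key : ∀ i ∈ J, ∀ y, le w y → le w (s n i * y) := by
      intro i hi' y hy
      rcases s_mul_le hy i with h1 | h1
      · exact h1
      · refine h1.head ⟨_, _, h i hi', ?_, ?_⟩
        · simp [lo_lt_hi]
        · rw [Equiv.mul_swap_eq_swap_mul]; simp [s_eq]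
    have : ∀ y, le w y → le w (x * y) := by
      refine Subgroup.closure_induction (p := fun x _ => ∀ y, le w y → le w (x * y))
        ?_ ?_ ?_ ?_ hx
      · rintro _ ⟨i, hi', rfl⟩
        exact key i hi'
      · intro y hy; simpa using hy
      · intro a b _ _ ha hb y hy
        rw [mul_assoc]; exact ha _ (hb _ hy)
      · intro a _ ha y hy
        have hfin : ∀ k : ℕ, le w (a ^ k * y) := by
          intro k
          induction k with
          | zero => simpa using hy
          | succ k ih => rw [pow_succ', mul_assoc]; exact ha _ ih
        have h2 : a⁻¹ = a ^ (orderOf a - 1) := by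
          rw [inv_eq_iff_mul_eq_one, ← pow_succ', Nat.sub_add_cancel (orderOf_pos a),
            pow_orderOf_eq_one]
        rw [h2]; exact hfin _
    exact this w .refl

lemma short_down {n : ℕ} {J : Finset (Fin (n - 1))} {w : Equiv.Perm (Fin n)}
    (h : IsShort n J w) {i : Fin (n - 1)} (hi' : w (hi i) < w (lo i)) :
    IsShort n J (w * s n i) := by
  rw [short_iff] at h ⊢
  intro j hj
  simp only [mul_inv_rev, s_inv, Equiv.Perm.mul_apply]
  rcases s_lt i (h j hj) with h1 | ⟨h1, h2⟩
  · exact h1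
  · rw [Equiv.Perm.inv_eq_iff_eq] at h1 h2
    rw [← h1, ← h2] at hi'
    exact absurd hi' (not_lt.2 (lo_lt_hi j).le)

lemma short_up {n : ℕ} {J : Finset (Fin (n - 1))} {w : Equiv.Perm (Fin n)}
    (h : IsShort n J w) (i : Fin (n - 1)) (hi' : ¬ IsShort n J (w * s n i)) :
    ∃ j ∈ J, w * s n i = s n j * w := by
  rw [short_iff] at h hi'
  push Not at hi'
  obtain ⟨j, hj, hj'⟩ := hi'
  refine ⟨j, hj, ?_⟩
  simp only [mul_inv_rev, s_inv, Equiv.Perm.mul_apply] at hj'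
  rcases s_lt i (h j hj) with h1 | ⟨h1, h2⟩
  · exact absurd h1 (not_lt.2 hj')
  · rw [Equiv.Perm.inv_eq_iff_eq] at h1 h2
    rw [s_eq, Equiv.mul_swap_eq_swap_mul, ← h1, ← h2, s_eq]

lemma exists_descent {n : ℕ} (w : Equiv.Perm (Fin n)) (hw : w ≠ 1) :
    ∃ i : Fin (n - 1), w (hi i) < w (lo i) := by
  obtain ⟨l, h1, h2⟩ := exists_reduced w
  rcases List.eq_nil_or_concat l with rfl | ⟨l, i, rfl⟩
  · exact absurd h2.symm hw
  · rw [List.concat_eq_append] at h1 h2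
    subst h2
    obtain ⟨h3, h4⟩ := reduced_init h1
    exact ⟨i, by rw [wordProd_append]; simpa [s_eq] using h4⟩

lemma len_one {n : ℕ} : len n 1 = 0 := by
  have := len_le (n := n) []
  simpa [wordProd] using this

lemma H_word {n : ℕ} {A : Type} [Ring A] (H : Equiv.Perm (Fin n) → A) (hone : H 1 = 1)
    (hmul : ∀ (w : Equiv.Perm (Fin n)) (i : Fin (n - 1)),
      len n (w * s n i) = len n w + 1 → H (w * s n i) = H w * H (s n i))
    (l : List (Fin (n - 1))) (h : l.length = len n (wordProd n l)) :
    H (wordProd n l) = (l.map fun i => H (s n i)).prod := by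
  induction l using List.reverseRecOn with
  | nil => simpa [wordProd] using hone
  | append_singleton l i ih =>
    obtain ⟨h1, h2⟩ := reduced_init h
    rw [wordProd_append, hmul _ _ (len_up h2), ih h1]
    simp

lemma H_left {n : ℕ} {A : Type} [Ring A] (H : Equiv.Perm (Fin n) → A) (hone : H 1 = 1)
    (hmul : ∀ (w : Equiv.Perm (Fin n)) (i : Fin (n - 1)),
      len n (w * s n i) = len n w + 1 → H (w * s n i) = H w * H (s n i))
    (w : Equiv.Perm (Fin n)) (j : Fin (n - 1)) (h : len n (s n j * w) = len n w + 1) :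
    H (s n j * w) = H (s n j) * H w := by
  obtain ⟨l, h1, rfl⟩ := exists_reduced w
  rw [H_word H hone hmul l h1, ← wordProd_cons, H_word H hone hmul (j :: l)]
  · simp
  · rw [wordProd_cons, h, ← h1]; rfl

open Polynomial in
lemma aeval_inj {p r : ℤ[X]} (h : aeval q p = aeval q r) : p = r := by
  have key : ∀ p : ℤ[X], aeval q p = algebraMap ℂ[X] K (p.map (Int.castRingHom ℂ)) := by
    intro p
    induction p using Polynomial.induction_on' with
    | add p r hp hr => simp [hp, hr]
    | monomial k a => simp [q, ← C_mul_X_pow_eq_monomial]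
  rw [key, key] at h
  exact Polynomial.map_injective _ (RingHom.injective_int _) (RatFunc.algebraMap_injective ℂ h)

lemma q_ne : q ≠ 0 := RatFunc.X_ne_zero

open Polynomial in
lemma bar_poly (barK : K →+* K) (hbarKq : barK q = q⁻¹) (p : ℤ[X])
    (h : barK (q * aeval q p) = q * aeval q p) : p = 0 := by
  by_contra hp
  have h1 : barK (aeval q p) = aeval q⁻¹ p := by
    rw [← hbarKq]
    rw [aeval_def, aeval_def, Polynomial.hom_eval₂]
    congr 1
    exact RingHom.ext_int _ _
  let : Invertible q⁻¹ := ⟨q, mul_inv_cancel₀ q_ne, inv_mul_cancel₀ q_ne⟩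
  have h2 : aeval q (reverse p) * (q⁻¹) ^ p.natDegree = aeval q⁻¹ p :=
    eval₂_reverse_mul_pow (algebraMap ℤ K) q⁻¹ p
  rw [map_mul, hbarKq, h1, ← h2] at h
  have h3 : aeval q (reverse p) = aeval q (X ^ (p.natDegree + 2) * p) := by
    rw [map_mul, map_pow, aeval_X]
    have h4 : q ^ p.natDegree * q⁻¹ ^ p.natDegree = 1 := by
      rw [← mul_pow, mul_inv_cancel₀ q_ne, one_pow]
    have h5 := mul_inv_cancel₀ q_ne
    linear_combination q ^ (p.natDegree + 1) * h - aeval q p.reverse * h4 -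
      aeval q p.reverse * q ^ p.natDegree * q⁻¹ ^ p.natDegree * h5
  have h4 := aeval_inj h3
  have h5 := reverse_natDegree_le p
  rw [h4, natDegree_X_pow_mul _ hp] at h5
  omega

section
variable {n : ℕ} {M : Type} [AddCommGroup M]

open Polynomial in
def L [Module ℤ[X] M] (J : Finset (Fin (n - 1))) (N : Equiv.Perm (Fin n) → M)
    (w : Equiv.Perm (Fin n)) : Submodule ℤ[X] M :=
  Submodule.span ℤ[X] (N '' {x | IsShort n J x ∧ le x w ∧ x ≠ w})

open Polynomial in
lemma L_mem [Module ℤ[X] M] {J : Finset (Fin (n - 1))} (N : Equiv.Perm (Fin n) → M)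
    {x w : Equiv.Perm (Fin n)} (h : IsShort n J x) (h1 : le x w) (h2 : x ≠ w) :
    N x ∈ L J N w := Submodule.subset_span ⟨x, ⟨h, h1, h2⟩, rfl⟩

open Polynomial in
lemma L_mono [Module ℤ[X] M] {J : Finset (Fin (n - 1))} (N : Equiv.Perm (Fin n) → M)
    {x w : Equiv.Perm (Fin n)} (h1 : le x w) : L J N x ≤ L J N w := by
  apply Submodule.span_mono
  apply Set.image_mono
  rintro y ⟨h2, h3, h4⟩
  refine ⟨h2, le_tr h3 h1, ?_⟩
  rintro rfl
  rcases h1.len with h5 | h5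
  · exact h4 h5.symm
  · rcases h3.len with h6 | h6
    · exact h4 h6
    · omega

open Polynomial in
lemma exists_C [Module K M] [Module ℤ[X] M]
    (hX : ∀ (p : ℤ[X]) (m : M), p • m = (aeval q p : K) • m)
    (J : Finset (Fin (n - 1))) (N : Equiv.Perm (Fin n) → M)
    (barM : M → M) (hbarM_add : ∀ m m' : M, barM (m + m') = barM m + barM m')
    (hbarM_one : barM (N 1) = N 1)
    (T : Fin (n - 1) → M →ₗ[K] M)
    (hTbar : ∀ i m, barM m = m → barM (T i m) = T i m)
    (hT1 : ∀ (x : Equiv.Perm (Fin n)) i, x (lo i) < x (hi i) →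
      T i (N x) = N (x * s n i) + q • N x)
    (hT2 : ∀ (x : Equiv.Perm (Fin n)) i, IsShort n J x → x (lo i) < x (hi i) →
      ¬ IsShort n J (x * s n i) → T i (N x) = 0 ∨ T i (N x) = (q + q⁻¹) • N x)
    (hT3 : ∀ (x : Equiv.Perm (Fin n)) i, x (hi i) < x (lo i) →
      T i (N x) = N (x * s n i) + q⁻¹ • N x) :
    ∀ w, IsShort n J w → ∃ c, barM c = c ∧ ∃ m ∈ L J N w, c = N w + (X : ℤ[X]) • m := by
  have hXq : ∀ m : M, (X : ℤ[X]) • m = q • m := fun m => by rw [hX, aeval_X]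
  have hTX : ∀ i (p : ℤ[X]) m, T i (p • m) = p • T i m := by
    intro i p m; rw [hX, hX, map_smul]
  let B : M →+ M := AddMonoidHom.mk' barM hbarM_add
  have hB : ∀ m, barM m = B m := fun _ => rfl
  suffices H : ∀ k, ∀ w, len n w = k → IsShort n J w →
      ∃ c, barM c = c ∧ ∃ m ∈ L J N w, c = N w + (X : ℤ[X]) • m from
    fun w hw => H _ w rfl hw
  intro k
  induction k using Nat.strong_induction_on with
  | _ k ih =>
  intro w hk hw
  by_cases hw1 : w = 1
  · subst hw1
    exact ⟨N 1, hbarM_one, 0, Submodule.zero_mem _, by simp⟩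
  obtain ⟨i, hi'⟩ := exists_descent w hw1
  obtain ⟨v, hv⟩ : ∃ v, v = w * s n i := ⟨_, rfl⟩
  have hvw : w = v * s n i := by rw [hv, mul_assoc, s_mul_s, mul_one]
  have hvs : IsShort n J v := hv ▸ short_down hw hi'
  have hvi : v (lo i) < v (hi i) := by rw [hv]; simpa [s_eq] using hi'
  have hlen : len n w = len n v + 1 := hv ▸ len_down hi'
  have hvle : le v w := hvw ▸ (step_s hvi).le
  have hvne : v ≠ w := by rintro rfl; omega
  -- bar-invariant elements span `L`
  let Bw : Set M := {c | barM c = c ∧ c ∈ L J N w}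
  have hspan : ∀ k', ∀ x, len n x = k' → IsShort n J x → le x w → x ≠ w →
      N x ∈ Submodule.span ℤ[X] Bw := by
    intro k'
    induction k' using Nat.strong_induction_on with
    | _ k' ih' =>
    intro x hxk hx hxw hxn
    have hxlt : len n x < len n w := hxw.len.resolve_left hxn
    obtain ⟨c, hc, m, hm, hcm⟩ := ih (len n x) (by omega) x rfl hx
    have hmL : m ∈ L J N w := L_mono N hxw hm
    have h1 : c ∈ Bw := ⟨hc, by
      rw [hcm]
      exact Submodule.add_mem _ (L_mem N hx hxw hxn) (Submodule.smul_mem _ _ hmL)⟩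
    have h2 : L J N x ≤ Submodule.span ℤ[X] Bw := by
      apply Submodule.span_le.2
      rintro _ ⟨y, ⟨hy1, hy2, hy3⟩, rfl⟩
      have hylt : len n y < len n x := hy2.len.resolve_left hy3
      exact ih' (len n y) (by omega) y rfl hy1 (le_tr hy2 hxw) (by rintro rfl; omega)
    have h3 : N x = c - (X : ℤ[X]) • m := by rw [hcm]; abel
    rw [h3]
    exact Submodule.sub_mem _ (Submodule.subset_span h1) (Submodule.smul_mem _ _ (h2 hm))
  have hLB : L J N w ≤ Submodule.span ℤ[X] Bw := by
    apply Submodule.span_le.2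
    rintro _ ⟨y, ⟨hy1, hy2, hy3⟩, rfl⟩
    exact hspan _ y rfl hy1 hy2 hy3
  have hsplit : ∀ l ∈ Submodule.span ℤ[X] Bw,
      ∃ b, barM b = b ∧ b ∈ L J N w ∧ ∃ l' ∈ L J N w, l = b + (X : ℤ[X]) • l' := by
    intro l hl
    induction hl using Submodule.span_induction with
    | mem x hx => exact ⟨x, hx.1, hx.2, 0, Submodule.zero_mem _, by simp⟩
    | zero => exact ⟨0, by rw [hB, map_zero], Submodule.zero_mem _, 0, Submodule.zero_mem _,
        by simp⟩
    | add x y _ _ hx hy =>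
      obtain ⟨b, h1, h2, l, h3, rfl⟩ := hx
      obtain ⟨b', h1', h2', l', h3', rfl⟩ := hy
      refine ⟨b + b', by rw [hbarM_add, h1, h1'], Submodule.add_mem _ h2 h2', l + l',
        Submodule.add_mem _ h3 h3', ?_⟩
      rw [smul_add]; abel
    | smul p x _ hx =>
      obtain ⟨b, h1, h2, l, h3, rfl⟩ := hx
      have hz : (C (p.coeff 0) : ℤ[X]) • b = p.coeff 0 • b := by
        rw [hX, aeval_C]
        simp [Int.cast_smul_eq_zsmul]
      refine ⟨p.coeff 0 • b, ?_, ?_, p.divX • b + p • l, ?_, ?_⟩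
      · rw [hB, map_zsmul, ← hB, h1]
      · rw [← hz]; exact Submodule.smul_mem _ _ h2
      · exact Submodule.add_mem _ (Submodule.smul_mem _ _ h2) (Submodule.smul_mem _ _ h3)
      · have h5 : p • b = (X : ℤ[X]) • p.divX • b + p.coeff 0 • b := by
          conv_lhs => rw [← Polynomial.X_mul_divX_add p]
          rw [add_smul, mul_smul, hz]
        rw [smul_add, h5, smul_add, smul_comm p]; abel
  obtain ⟨c, hc, m, hm, hcm⟩ := ih (len n v) (by omega) v rfl hvs
  have hTm : ∀ m ∈ L J N v, (X : ℤ[X]) • T i m ∈ L J N w := by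
    intro m hm
    induction hm using Submodule.span_induction with
    | zero => simp
    | add x y _ _ hx hy => rw [map_add, smul_add]; exact Submodule.add_mem _ hx hy
    | smul p x _ hx => rw [hTX, smul_comm]; exact Submodule.smul_mem _ _ hx
    | mem y hy =>
      obtain ⟨x, ⟨hx1, hx2, hx3⟩, rfl⟩ := hy
      have hxlt : len n x < len n v := hx2.len.resolve_left hx3
      have hxm : N x ∈ L J N w := L_mem N hx1 (le_tr hx2 hvle) (by rintro rfl; omega)
      have hxs : IsShort n J (x * s n i) → N (x * s n i) ∈ L J N w := fun h =>
        L_mem N h (hvw ▸ le_lift hx2 i hvi) (by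
          rw [hvw]; intro e; exact hx3 (mul_right_cancel e))
      rcases lt_or x i with h | h
      · by_cases h' : IsShort n J (x * s n i)
        · rw [hT1 x i h, smul_add, ← hXq]
          exact Submodule.add_mem _ (Submodule.smul_mem _ _ (hxs h'))
            (Submodule.smul_mem _ _ (Submodule.smul_mem _ _ hxm))
        · rcases hT2 x i hx1 h h' with h1 | h1
          · rw [h1]; simp
          · have : (X : ℤ[X]) • T i (N x) = (X ^ 2 + 1 : ℤ[X]) • N x := by
              rw [h1, hX, hX, smul_smul]
              congr 1
              simp only [map_add, map_pow, aeval_X, map_one]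
              have := mul_inv_cancel₀ q_ne
              linear_combination this
            rw [this]
            exact Submodule.smul_mem _ _ hxm
      · rw [hT3 x i h, smul_add, hXq (q⁻¹ • N x), smul_smul, mul_inv_cancel₀ q_ne, one_smul]
        exact Submodule.add_mem _ (Submodule.smul_mem _ _ (hxs (short_down hx1 h))) hxm
  have hTc : T i c = N w + ((X : ℤ[X]) • N v + (X : ℤ[X]) • T i m) := by
    rw [hcm, map_add, hTX, hT1 v i hvi, ← hvw, ← hXq]; abel
  obtain ⟨b, hb1, hb2, l', hl', hbl⟩ := hsplit _ (hLB (Submodule.add_mem _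
    (Submodule.smul_mem _ X (L_mem N hvs hvle hvne)) (hTm m hm)))
  refine ⟨T i c - b, ?_, l', hl', ?_⟩
  · rw [hB, map_sub, ← hB, ← hB, hTbar i c hc, hb1]
  · rw [hTc, hbl]; abel

end

end HeckeAux

/-- There exists a unique basis `{N̲_w : w ∈ W^{p+q}}` of the mixed
induced module `M^p_q` consisting of bar-invariant elements such that
`N̲_w = N_w + Σ_{w' ≺ w} R_{w',w}(q)·N_{w'}` with `R_{w',w} ∈ q·ℤ[q]` for all `w' ≺ w`. -/
theorem statement1 (n : ℕ) (A : Type) [Ring A] [Algebra K A]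
    (H : Equiv.Perm (Fin n) → A)
    (hHLI : LinearIndependent K H)
    (hHspan : Submodule.span K (Set.range H) = ⊤)
    (hone : H 1 = 1)
    (hmul : ∀ (w : Equiv.Perm (Fin n)) (i : Fin (n - 1)),
      len n (w * s n i) = len n w + 1 → H (w * s n i) = H w * H (s n i))
    (hquad : ∀ i : Fin (n - 1),
      H (s n i) * H (s n i) = (q⁻¹ - q) • H (s n i) + 1)
    (barK : K →+* K) (hbarKq : barK q = q⁻¹)
    (hbarKc : ∀ z : ℂ, barK (algebraMap ℂ K z) = algebraMap ℂ K z)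
    (bar : A →+* A)
    (hbar_smul : ∀ (c : K) (x : A), bar (c • x) = barK c • bar x)
    (hbarH : ∀ w : Equiv.Perm (Fin n),
      bar (H w) * H w⁻¹ = 1 ∧ H w⁻¹ * bar (H w) = 1)
    -- the parabolic subgroups W_p and W_q, which commute with each other
    (P Q : Finset (Fin (n - 1)))
    (hPQ : ∀ i ∈ P, ∀ j ∈ Q, s n i * s n j = s n j * s n i)
    -- the module M^p_q, a right A-module
    (M : Type) [AddCommGroup M] [Module K M]
    (act : M → A → M)
    (hact_addl : ∀ (m m' : M) (a : A), act (m + m') a = act m a + act m' a)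
    (hact_addr : ∀ (m : M) (a b : A), act m (a + b) = act m a + act m b)
    (hact_smull : ∀ (c : K) (m : M) (a : A), act (c • m) a = c • act m a)
    (hact_smulr : ∀ (c : K) (m : M) (a : A), act m (c • a) = c • act m a)
    (hact_one : ∀ m : M, act m 1 = m)
    (hact_mul : ∀ (m : M) (a b : A), act m (a * b) = act (act m a) b)
    -- the standard basis N_w = (1 ⊗ 1) · H_w
    (N : Equiv.Perm (Fin n) → M)
    (hN : ∀ w, N w = act (N 1) (H w))
    (hgenP : ∀ i ∈ P, act (N 1) (H (s n i)) = (-q) • N 1)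
    (hgenQ : ∀ i ∈ Q, act (N 1) (H (s n i)) = q⁻¹ • N 1)
    (hNLI : LinearIndependent K
      (fun w : {w : Equiv.Perm (Fin n) // IsShort n (P ∪ Q) w} => N w))
    (hNspan : Submodule.span K (N '' {w | IsShort n (P ∪ Q) w}) = ⊤)
    -- the bar involution of M^p_q
    (barM : M → M)
    (hbarM_add : ∀ m m' : M, barM (m + m') = barM m + barM m')
    (hbarM_smul : ∀ (c : K) (m : M), barM (c • m) = barK c • barM m)
    (hbarM_act : ∀ (m : M) (a : A), barM (act m a) = act (barM m) (bar a))
    (hbarM_one : barM (N 1) = N 1) :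
    ∃! C : {w : Equiv.Perm (Fin n) // IsShort n (P ∪ Q) w} → M,
      (LinearIndependent K C ∧ Submodule.span K (Set.range C) = ⊤) ∧
      (∀ w, barM (C w) = C w) ∧
      (∀ w, ∃ R : {w : Equiv.Perm (Fin n) // IsShort n (P ∪ Q) w} → Polynomial ℤ,
        (∀ w', ¬ bruhatLT n w'.1 w.1 → R w' = 0) ∧
        C w = N w + ∑ w' : {w : Equiv.Perm (Fin n) // IsShort n (P ∪ Q) w},
          (q * Polynomial.aeval q (R w')) • N w') := by
  classical
  let T : Fin (n - 1) → M →ₗ[K] M := fun i =>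
    { toFun := fun m => act m (H (s n i)) + q • m
      map_add' := by intro a b; simp only [hact_addl, smul_add]; abel
      map_smul' := by
        intro c a
        simp only [hact_smull, smul_add, RingHom.id_apply]
        rw [smul_comm] }
  have hT : ∀ i m, T i m = act m (H (s n i)) + q • m := fun _ _ => rfl
  letI modX : Module (Polynomial ℤ) M :=
    Module.compHom M ((Polynomial.aeval q : Polynomial ℤ →ₐ[ℤ] K) : Polynomial ℤ →+* K)
  have hX : ∀ (p : Polynomial ℤ) (m : M), p • m = (Polynomial.aeval q p : K) • m :=
    fun _ _ => rfl
  have hact_neg : ∀ (m : M) (a b : A), act m (a - b) = act m a - act m b := by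
    intro m a b
    rw [eq_sub_iff_add_eq, ← hact_addr, sub_add_cancel]
  have hbars : ∀ i, bar (H (s n i)) = H (s n i) - (q⁻¹ - q) • (1 : A) := by
    intro i
    have h1 := (hbarH (s n i)).1
    rw [HeckeAux.s_inv] at h1
    have h2 : H (s n i) * (H (s n i) - (q⁻¹ - q) • (1 : A)) = 1 := by
      rw [mul_sub, hquad, mul_smul_comm, mul_one]; abel
    calc bar (H (s n i)) = bar (H (s n i)) * (H (s n i) * (H (s n i) - (q⁻¹ - q) • (1 : A))) := by
          rw [h2, mul_one]
      _ = _ := by rw [← mul_assoc, h1, one_mul]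
  have hTbar : ∀ i m, barM m = m → barM (T i m) = T i m := by
    intro i m hm
    rw [hT, hbarM_add, hbarM_act, hbarM_smul, hm, hbars, hact_neg, hact_smulr, hact_one, hbarKq,
      sub_smul]
    abel
  have hT1 : ∀ (x : Equiv.Perm (Fin n)) i, x (HeckeAux.lo i) < x (HeckeAux.hi i) →
      T i (N x) = N (x * s n i) + q • N x := by
    intro x i h
    rw [hT, hN (x * s n i), hmul _ _ (HeckeAux.len_up h), hact_mul, ← hN]
  have hT3 : ∀ (x : Equiv.Perm (Fin n)) i, x (HeckeAux.hi i) < x (HeckeAux.lo i) →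
      T i (N x) = N (x * s n i) + q⁻¹ • N x := by
    intro x i h
    obtain ⟨y, hy⟩ : ∃ y, y = x * s n i := ⟨_, rfl⟩
    have hx : x = y * s n i := by rw [hy, mul_assoc, HeckeAux.s_mul_s, mul_one]
    have h1 : act (N y) (H (s n i)) = N x := by
      have hl := HeckeAux.len_down h
      rw [← hy, hx] at hl
      rw [hx, hN (y * s n i), hmul _ _ hl, hact_mul, ← hN]
    rw [← hy, hT]
    have h2 : act (N x) (H (s n i)) = (q⁻¹ - q) • N x + N y := by
      rw [← h1, ← hact_mul, hquad, hact_addr, hact_smulr, hact_one]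
    rw [h2, sub_smul]; abel
  have hT2 : ∀ (x : Equiv.Perm (Fin n)) i, IsShort n (P ∪ Q) x →
      x (HeckeAux.lo i) < x (HeckeAux.hi i) → ¬ IsShort n (P ∪ Q) (x * s n i) →
      T i (N x) = 0 ∨ T i (N x) = (q + q⁻¹) • N x := by
    intro x i hx h h'
    obtain ⟨j, hj, he⟩ := HeckeAux.short_up hx i h'
    rw [hT1 x i h, he, hN (s n j * x),
      HeckeAux.H_left H hone hmul x j (by rw [← he]; exact HeckeAux.len_up h), hact_mul]
    rcases Finset.mem_union.1 hj with hj | hj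
    · left
      rw [hgenP j hj, hact_smull, ← hN, neg_smul, neg_add_cancel]
    · right
      rw [hgenQ j hj, hact_smull, ← hN, add_smul, add_comm]
  have hex := HeckeAux.exists_C hX (P ∪ Q) N barM hbarM_add hbarM_one T hTbar hT1 hT2 hT3
  let B : M →+ M := AddMonoidHom.mk' barM hbarM_add
  have hB : ∀ m, barM m = B m := fun _ => rfl
  let I := {w : Equiv.Perm (Fin n) // IsShort n (P ∪ Q) w}
  -- triangular families
  have hlt : ∀ x w : Equiv.Perm (Fin n), bruhatLT n x w → len n x < len n w := by
    intro x w h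
    exact ((HeckeAux.bruhatLE_iff x w).1 h.1).len.resolve_left h.2
  have hspanN : ∀ (C : I → M), (∀ w : I, ∃ R : I → Polynomial ℤ,
        (∀ w', ¬ bruhatLT n w'.1 w.1 → R w' = 0) ∧
        C w = N w + ∑ w' : I, (q * Polynomial.aeval q (R w')) • N w') →
      ∀ w : I, N w ∈ Submodule.span (Polynomial ℤ) (Set.range C) := by
    intro C hC
    suffices h : ∀ k, ∀ w : I, len n w.1 = k →
        N w ∈ Submodule.span (Polynomial ℤ) (Set.range C) from fun w => h _ w rfl
    intro k
    induction k using Nat.strong_induction_on with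
    | _ k ih =>
    intro w hk
    obtain ⟨R, hR, hCw⟩ := hC w
    have h1 : N w = C w - ∑ w' : I, (q * Polynomial.aeval q (R w')) • N w' := by
      rw [hCw]; abel
    rw [h1]
    refine Submodule.sub_mem _ (Submodule.subset_span ⟨w, rfl⟩) (Submodule.sum_mem _ ?_)
    intro w' _
    by_cases h2 : bruhatLT n w'.1 w.1
    · have h3 : (q * Polynomial.aeval q (R w')) • N w' =
          ((Polynomial.X * R w' : Polynomial ℤ)) • N w' := by
        rw [hX, map_mul, Polynomial.aeval_X]
      rw [h3]
      exact Submodule.smul_mem _ _ (ih (len n w'.1) (hk ▸ hlt _ _ h2) w' rfl)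
    · rw [hR w' h2]; simp
  have hXK : ∀ (S : Set M) (m : M), m ∈ Submodule.span (Polynomial ℤ) S →
      m ∈ Submodule.span K S := by
    intro S m hm
    induction hm using Submodule.span_induction with
    | mem x hx => exact Submodule.subset_span hx
    | zero => exact Submodule.zero_mem _
    | add x y _ _ hx hy => exact Submodule.add_mem _ hx hy
    | smul p x _ hx => rw [hX]; exact Submodule.smul_mem _ _ hx
  have hNspan' : Submodule.span K (Set.range fun w : I => N w) = ⊤ := by
    rw [← hNspan]
    congr 1
    ext m
    constructor
    · rintro ⟨w, rfl⟩; exact ⟨w.1, w.2, rfl⟩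
    · rintro ⟨w, hw, rfl⟩; exact ⟨⟨w, hw⟩, rfl⟩
  have hfin : Module.finrank K M = Fintype.card I := by
    rw [← finrank_top, ← hNspan', finrank_span_eq_card hNLI]
  choose! C0 hC0bar m0 hm0 hC0 using hex
  have hC0R : ∀ w : I, ∃ R : I → Polynomial ℤ,
        (∀ w', ¬ bruhatLT n w'.1 w.1 → R w' = 0) ∧
        C0 w = N w + ∑ w' : I, (q * Polynomial.aeval q (R w')) • N w' := by
    intro w
    have key : ∀ m ∈ HeckeAux.L (P ∪ Q) N w.1, ∃ R : I → Polynomial ℤ,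
        (∀ w', ¬ bruhatLT n w'.1 w.1 → R w' = 0) ∧ m = ∑ w' : I, R w' • N w' := by
      intro m hm
      induction hm using Submodule.span_induction with
      | mem y hy =>
        obtain ⟨x, ⟨hx1, hx2, hx3⟩, rfl⟩ := hy
        refine ⟨fun w' => if w'.1 = x then 1 else 0, ?_, ?_⟩
        · intro w' h
          beta_reduce
          rw [if_neg]
          rintro rfl
          exact h ⟨(HeckeAux.bruhatLE_iff _ _).2 hx2, hx3⟩
        · rw [Finset.sum_eq_single (⟨x, hx1⟩ : I)]
          · simp
          · intro b _ hb
            beta_reduce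
            rw [if_neg, zero_smul]
            intro e; exact hb (Subtype.ext e)
          · intro h; exact absurd (Finset.mem_univ _) h
      | zero => exact ⟨fun _ => 0, fun _ _ => rfl, by simp⟩
      | add x y _ _ hx hy =>
        obtain ⟨R, h1, h2⟩ := hx
        obtain ⟨R', h1', h2'⟩ := hy
        refine ⟨fun w' => R w' + R' w', fun w' h => by beta_reduce; rw [h1 w' h, h1' w' h, add_zero], ?_⟩
        simp only [add_smul, Finset.sum_add_distrib]
        rw [← h2, ← h2']
      | smul p x _ hx =>
        obtain ⟨R, h1, h2⟩ := hx
        refine ⟨fun w' => p * R w', fun w' h => by beta_reduce; rw [h1 w' h, mul_zero], ?_⟩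
        rw [h2, Finset.smul_sum]
        simp only [mul_smul]
    obtain ⟨R, h1, h2⟩ := key _ (hm0 w.1 w.2)
    refine ⟨R, h1, ?_⟩
    rw [hC0 w.1 w.2, h2, Finset.smul_sum]
    congr 1
    refine Finset.sum_congr rfl fun w' _ => ?_
    rw [smul_smul, hX, map_mul, Polynomial.aeval_X]
  refine ⟨fun w => C0 w.1, ⟨?_, fun w => hC0bar w.1 w.2, hC0R⟩, ?_⟩
  · have htop : Submodule.span K (Set.range fun w : I => C0 w.1) = ⊤ := by
      rw [eq_top_iff, ← hNspan', Submodule.span_le]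
      rintro _ ⟨w, rfl⟩
      exact hXK _ _ (hspanN (fun w => C0 w.1) hC0R w)
    exact ⟨linearIndependent_of_top_le_span_of_card_eq_finrank htop.ge hfin.symm, htop⟩
  · rintro C ⟨⟨hLI, _⟩, hCbar, hCR⟩
    funext w
    obtain ⟨R, _, h1⟩ := hCR w
    obtain ⟨R', _, h1'⟩ := hC0R w
    have hD : C w - C0 w.1 = (Polynomial.X : Polynomial ℤ) • ∑ w' : I, (R w' - R' w') • N w' := by
      rw [h1, h1', add_sub_add_left_eq_sub, ← Finset.sum_sub_distrib, Finset.smul_sum]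
      refine Finset.sum_congr rfl fun w' _ => ?_
      rw [smul_smul, hX, ← sub_smul, map_mul, map_sub, Polynomial.aeval_X, mul_sub]
    have hmem : ∑ w' : I, (R w' - R' w') • N w' ∈
        Submodule.span (Polynomial ℤ) (Set.range C) :=
      Submodule.sum_mem _ fun w' _ => Submodule.smul_mem _ _ (hspanN C hCR w')
    obtain ⟨p, hp⟩ := (Submodule.mem_span_range_iff_exists_fun _).1 hmem
    have hD' : C w - C0 w.1 = ∑ x : I, (q * Polynomial.aeval q (p x)) • C x := by
      rw [hD, ← hp, Finset.smul_sum]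
      refine Finset.sum_congr rfl fun w' _ => ?_
      rw [smul_smul, hX, map_mul, Polynomial.aeval_X]
    have hDbar : barM (C w - C0 w.1) = C w - C0 w.1 := by
      rw [hB, map_sub, ← hB, ← hB, hCbar, hC0bar w.1 w.2]
    have hsum : ∑ x : I, (barK (q * Polynomial.aeval q (p x)) - q * Polynomial.aeval q (p x)) • C x
        = 0 := by
      simp only [sub_smul, Finset.sum_sub_distrib]
      rw [← hD', sub_eq_zero, ← hDbar, hD', hB, map_sum]
      refine Finset.sum_congr rfl fun x _ => ?_
      rw [← hB, hbarM_smul, hCbar]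
    have hz : ∀ x, p x = 0 := fun x => HeckeAux.bar_poly barK hbarKq (p x)
      (sub_eq_zero.1 (Fintype.linearIndependent_iff.1 hLI _ hsum x))
    rw [← sub_eq_zero, hD']
    simp [hz]
end
end
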